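/- arXiv:1805.00248 — 3 statements merged into one kernel-verified Lean document; each statement's English description precedes it below -/
import Mathlib

section
/- Let m ∈ ℕ and let v₁,…,v_m ∈ ℝⁿ satisfy ⟨v_i, C v_j⟩ = 0 for all i, j ≤ m, where C := S⁻¹. Then for every polynomial function Φ : ℝ^m → ℂ, the ratio ∫_{ℝⁿ} Φ(⟨x,v₁⟩,…,⟨x,v_m⟩)·exp(−ε‖x‖²)·exp((i/2)⟨x,Sx⟩) dx ⧸ ∫_{ℝⁿ} exp(−ε‖x‖²)·exp((i/2)⟨x,Sx⟩) dx converges, as ε → 0⁺, to Φ(0,…,0). (For every ε > 0 the numerator is absolutely convergent and the denominator is nonzero.) -/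
open MeasureTheory Matrix

/-!
Write the regularized density as `exp (-⟨x, Ax⟩ / 2)` with `A = 2ε - iS`. Integration by parts gives
Wick's recursion `E[xᵢ p] = ∑ⱼ (A⁻¹)ᵢⱼ E[∂ⱼ p]` for the normalized moments. The recursion is stable
under linear substitutions, so the moments of the variables `⟨x, vᵢ⟩` obey it with covariance
`⟨vᵢ, A⁻¹ vⱼ⟩`, which tends to `i ⟨vᵢ, S⁻¹ vⱼ⟩ = 0` as `ε → 0⁺`. By induction on the degree the
recursion determines every moment, continuously in the covariance, and for covariance `0` its
solution is evaluation at the origin. The normalization is nonzero because an orthogonal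
diagonalization of `S` turns it into a product of one-dimensional Gaussian integrals.
-/

open Filter Topology MvPolynomial
open Complex (ofReal)

section Wick

variable {R ι κ : Type*} [CommSemiring R]

theorem mvPolynomial_induction_on_pderiv {motive : MvPolynomial κ R → Prop}
    (C : ∀ a, motive (C a)) (add : ∀ p q, motive p → motive q → motive (p + q))
    (X_mul : ∀ i p, (∀ j, motive (pderiv j p)) → motive (X i * p)) (p : MvPolynomial κ R) :
    motive p := by
  have monomial_of_degree (N : ℕ) : ∀ s : κ →₀ ℕ, s.degree = N → ∀ c, motive (monomial s c) := by
    induction N using Nat.strong_induction_on with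
    | _ N ih =>
      intro s hs c
      obtain rfl | ⟨i, hi⟩ : s = 0 ∨ ∃ i, s i ≠ 0 := by
        simpa only [Finsupp.ne_iff, Finsupp.zero_apply] using eq_or_ne s 0
      · exact C c
      obtain ⟨t, rfl⟩ : ∃ t, s = Finsupp.single i 1 + t :=
        exists_add_of_le (Finsupp.single_le_iff.mpr (Nat.one_le_iff_ne_zero.mpr hi))
      have monomial_eq : monomial (Finsupp.single i 1 + t) c = X i * monomial t c := by
        rw [X, monomial_mul, one_mul]
      rw [monomial_eq]
      refine X_mul i _ fun j => ?_
      rw [pderiv_monomial]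
      refine ih _ ?_ _ rfl _
      have degree_le : (t - Finsupp.single j 1).degree ≤ t.degree :=
        Finsupp.degree_mono tsub_le_self
      rw [map_add, Finsupp.degree_single] at hs
      lia
  induction p using MvPolynomial.induction_on' with
  | monomial s c => exact monomial_of_degree _ s rfl c
  | add p q hp hq => exact add p q hp hq

theorem pderiv_bind₁ [Fintype κ] (f : κ → MvPolynomial ι R) (k : ι) (p : MvPolynomial κ R) :
    pderiv k (bind₁ f p) = ∑ j, pderiv k (f j) * bind₁ f (pderiv j p) := by
  classical
  induction p using MvPolynomial.induction_on with
  | C a => simp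
  | add p q hp hq => simp only [map_add, hp, hq, mul_add, Finset.sum_add_distrib]
  | mul_X p i hp =>
    simp only [map_mul, bind₁_X_right, pderiv_mul, hp, pderiv_X, map_add, mul_add,
      Finset.sum_add_distrib, Finset.sum_mul, mul_assoc, Pi.single_apply, apply_ite (bind₁ f),
      map_zero, mul_ite, mul_one, mul_zero, Finset.sum_ite_eq, Finset.mem_univ, if_true]
    rw [mul_comm (bind₁ f p)]

theorem pderiv_toMvPolynomial [Fintype ι] (V : Matrix κ ι R) (j : κ) (k : ι) :
    pderiv k (V.toMvPolynomial j) = C (V j k) := by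
  classical
  simp [toMvPolynomial, ← C_mul_X_eq_monomial, pderiv_X, Pi.single_apply]

/-- A Gaussian expectation with covariance `C`, seen algebraically: a normalized linear functional
on polynomials satisfying Wick's recursion. -/
structure IsWickFunctional [Fintype ι] (C : Matrix ι ι R) (E : MvPolynomial ι R → R) : Prop where
  isLinearMap : IsLinearMap R E
  map_one : E 1 = 1
  map_X_mul : ∀ i p, E (X i * p) = ∑ j, C i j * E (pderiv j p)

namespace IsWickFunctional

theorem eval_zero [Fintype ι] : IsWickFunctional (0 : Matrix ι ι R) (eval 0) where
  isLinearMap := ⟨fun _ _ => map_add _ _ _, fun _ _ => smul_eval _ _ _⟩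
  map_one := _root_.map_one _
  map_X_mul i p := by simp

variable [Fintype ι] [Fintype κ] {C : Matrix ι ι R} {E : MvPolynomial ι R → R}

theorem map_C (hE : IsWickFunctional C E) (a : R) : E (MvPolynomial.C a) = a := by
  rw [C_eq_smul_one, hE.isLinearMap.map_smul, hE.map_one, smul_eq_mul, mul_one]

theorem map_sum_C_mul (hE : IsWickFunctional C E) {α : Type*} (s : Finset α) (c : α → R)
    (p : α → MvPolynomial ι R) :
    E (∑ a ∈ s, MvPolynomial.C (c a) * p a) = ∑ a ∈ s, c a * E (p a) := by
  simp only [C_mul']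
  exact (map_sum (hE.isLinearMap.mk' E) _ s).trans <|
    Finset.sum_congr rfl fun a _ => hE.isLinearMap.map_smul (c a) (p a)

theorem comp_bind₁_toMvPolynomial (hE : IsWickFunctional C E) (V : Matrix κ ι R) :
    IsWickFunctional (V * C * Vᵀ) (fun p => E (bind₁ V.toMvPolynomial p)) where
  isLinearMap :=
    (hE.isLinearMap.mk' E ∘ₗ (bind₁ V.toMvPolynomial).toLinearMap).isLinear
  map_one := by rw [_root_.map_one, hE.map_one]
  map_X_mul i p := by
    set φ := bind₁ V.toMvPolynomial
    have pderiv_map (l : ι) : E (pderiv l (φ p)) = ∑ j, V j l * E (φ (pderiv j p)) := by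
      simp only [φ, pderiv_bind₁, pderiv_toMvPolynomial, hE.map_sum_C_mul]
    have map_linear_mul : E (φ (X i) * φ p) = ∑ k, V i k * E (X k * φ p) := by
      simp only [φ, bind₁_X_right, toMvPolynomial, ← C_mul_X_eq_monomial, Finset.sum_mul,
        mul_assoc, hE.map_sum_C_mul]
    calc E (φ (X i * p))
        = ∑ k, V i k * ∑ l, C k l * ∑ j, V j l * E (φ (pderiv j p)) := by
          simp only [map_mul, map_linear_mul, hE.map_X_mul, pderiv_map]
      _ = (V *ᵥ C *ᵥ Vᵀ *ᵥ fun j => E (φ (pderiv j p))) i := rfl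
      _ = ∑ j, (V * C * Vᵀ) i j * E (φ (pderiv j p)) := by
          rw [mulVec_mulVec, mulVec_mulVec]; rfl

theorem tendsto [TopologicalSpace R] [IsTopologicalSemiring R] {α : Type*} {l : Filter α}
    {C : α → Matrix ι ι R} {E : α → MvPolynomial ι R → R}
    {C₀ : Matrix ι ι R} {E₀ : MvPolynomial ι R → R}
    (hE : ∀ᶠ a in l, IsWickFunctional (C a) (E a)) (hE₀ : IsWickFunctional C₀ E₀)
    (hC : Tendsto C l (𝓝 C₀)) (p : MvPolynomial ι R) :
    Tendsto (fun a => E a p) l (𝓝 (E₀ p)) := by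
  induction p using mvPolynomial_induction_on_pderiv with
  | C c =>
    rw [hE₀.map_C]
    exact tendsto_const_nhds.congr' (hE.mono fun a ha => (ha.map_C c).symm)
  | add p q hp hq =>
    rw [hE₀.isLinearMap.map_add]
    exact (hp.add hq).congr' (hE.mono fun a ha => (ha.isLinearMap.map_add p q).symm)
  | X_mul i p hp =>
    rw [hE₀.map_X_mul]
    have entry (j : ι) : Tendsto (fun a => C a i j) l (𝓝 (C₀ i j)) :=
      (continuous_id.matrix_elem i j).continuousAt.tendsto.comp hC
    exact (tendsto_finsetSum _ fun j _ => (entry j).mul (hp j)).congr'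
      (hE.mono fun a ha => (ha.map_X_mul i p).symm)

end IsWickFunctional

end Wick

section GaussianWeight

variable {ι : Type*}

theorem hasLineDerivAt_eval_ofReal [DecidableEq ι] (p : MvPolynomial ι ℂ) (x : ι → ℝ) (k : ι) :
    HasLineDerivAt ℝ (fun y : ι → ℝ => eval (ofReal ∘ y) p)
      (eval (ofReal ∘ x) (pderiv k p)) x (Pi.single k 1) := by
  induction p using MvPolynomial.induction_on with
  | C a =>
    simp only [HasLineDerivAt, eval_C, pderiv_C, map_zero]
    exact hasDerivAt_const _ _
  | add p q hp hq =>
    simp only [map_add]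
    exact HasDerivAt.add hp hq
  | mul_X p i hp =>
    have coordinate : HasLineDerivAt ℝ (fun y : ι → ℝ => (y i : ℂ))
        ((Pi.single k 1 : ι → ℝ) i : ℂ) x (Pi.single k 1) :=
      (((hasDerivAt_id (0 : ℝ)).mul_const _).const_add (x i)).ofReal_comp.congr_deriv
        (by rw [one_mul])
    simp only [map_mul, eval_X, Function.comp_apply]
    refine (HasDerivAt.fun_mul hp coordinate).congr_deriv ?_
    by_cases h : i = k <;> simp [pderiv_X, h, mul_comm, add_comm]

variable [Fintype ι]

/-- The density `exp (-⟨x, A x⟩ / 2)` on `ℝⁿ` with complex precision matrix `A`. -/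
noncomputable def gaussianWeight (A : Matrix ι ι ℂ) (x : ι → ℝ) : ℂ :=
  Complex.exp (-(1 / 2) * (ofReal ∘ x ⬝ᵥ A *ᵥ (ofReal ∘ x)))

/-- The unnormalized moment of the polynomial `p` against `gaussianWeight A`. -/
noncomputable def gaussianIntegral (A : Matrix ι ι ℂ) (p : MvPolynomial ι ℂ) : ℂ :=
  ∫ x : ι → ℝ, eval (ofReal ∘ x) p * gaussianWeight A x

/-- All polynomial moments of `gaussianWeight A` converge absolutely. -/
def HasGaussianMoments (A : Matrix ι ι ℂ) : Prop :=
  ∀ p : MvPolynomial ι ℂ, Integrable fun x : ι → ℝ => eval (ofReal ∘ x) p * gaussianWeight A x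

theorem continuous_gaussianWeight (A : Matrix ι ι ℂ) : Continuous (gaussianWeight A) := by
  unfold gaussianWeight
  fun_prop

theorem norm_gaussianWeight_le {A : Matrix ι ι ℂ} {c : ℝ} {x : ι → ℝ}
    (hA : c * ∑ i, x i ^ 2 ≤ (ofReal ∘ x ⬝ᵥ A *ᵥ (ofReal ∘ x)).re) :
    ‖gaussianWeight A x‖ ≤ ∏ i, Real.exp (-(c / 2) * x i ^ 2) := by
  rw [gaussianWeight, Complex.norm_exp, ← Real.exp_sum, ← Finset.mul_sum, Real.exp_le_exp]
  have re_eq (w : ℂ) : (-(1 / 2) * w).re = -(1 / 2) * w.re := by simp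
  rw [re_eq]
  linarith

theorem integrable_pow_mul_exp_neg_mul_sq {b : ℝ} (hb : 0 < b) (k : ℕ) :
    Integrable fun x : ℝ => x ^ k * Real.exp (-b * x ^ 2) := by
  simpa only [Real.rpow_natCast] using
    integrable_rpow_mul_exp_neg_mul_sq hb (neg_one_lt_zero.trans_le k.cast_nonneg)

theorem hasGaussianMoments_of_coercive {A : Matrix ι ι ℂ} {c : ℝ} (hc : 0 < c)
    (hA : ∀ x : ι → ℝ, c * ∑ i, x i ^ 2 ≤ (ofReal ∘ x ⬝ᵥ A *ᵥ (ofReal ∘ x)).re) :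
    HasGaussianMoments A := by
  intro p
  induction p using MvPolynomial.induction_on' with
  | monomial s a =>
    have dominant : Integrable fun x : ι → ℝ =>
        ‖a‖ * ‖∏ i, x i ^ s i * Real.exp (-(c / 2) * x i ^ 2)‖ :=
      (Integrable.fintype_prod fun i =>
        integrable_pow_mul_exp_neg_mul_sq (half_pos hc) (s i)).norm.const_mul _
    refine dominant.mono' ?_ (.of_forall fun x => ?_)
    · have := continuous_gaussianWeight A
      simp only [eval_monomial, Finsupp.prod, Function.comp_apply]
      fun_prop
    · calc ‖eval (ofReal ∘ x) (monomial s a) * gaussianWeight A x‖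
          = ‖a‖ * (∏ i, ‖x i‖ ^ s i) * ‖gaussianWeight A x‖ := by
            simp [eval_monomial, Finsupp.prod_fintype]
        _ ≤ ‖a‖ * (∏ i, ‖x i‖ ^ s i) * ∏ i, Real.exp (-(c / 2) * x i ^ 2) := by
            gcongr
            exact norm_gaussianWeight_le (hA x)
        _ = ‖a‖ * ‖∏ i, x i ^ s i * Real.exp (-(c / 2) * x i ^ 2)‖ := by
            simp [Finset.prod_mul_distrib, mul_assoc]
  | add p q hp hq =>
    simp only [map_add, add_mul]
    exact hp.add hq

theorem hasLineDerivAt_gaussianWeight [DecidableEq ι] {A : Matrix ι ι ℂ} (hA : A.IsSymm)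
    (x : ι → ℝ) (k : ι) :
    HasLineDerivAt ℝ (gaussianWeight A)
      (-((A *ᵥ (ofReal ∘ x)) k * gaussianWeight A x)) x (Pi.single k 1) := by
  set z : ι → ℂ := ofReal ∘ x with hz
  have along_line (t : ℝ) : gaussianWeight A (x + t • Pi.single k 1) =
      Complex.exp (-(1 / 2) * (z ⬝ᵥ A *ᵥ z + 2 * (A *ᵥ z) k * t + A k k * t ^ 2)) := by
    have ofReal_line : ofReal ∘ (x + t • Pi.single k 1) = z + (t : ℂ) • Pi.single k 1 := by
      ext i
      by_cases h : i = k <;> simp [h, hz]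
    have dotProduct_col : z ⬝ᵥ A.col k = (A *ᵥ z) k :=
      (dotProduct_comm _ _).trans (congrArg (· ⬝ᵥ z) (funext fun i => hA.apply k i))
    rw [gaussianWeight, ofReal_line]
    simp only [mulVec_add, mulVec_smul, mulVec_single_one, add_dotProduct, dotProduct_add,
      smul_dotProduct, dotProduct_smul, single_one_dotProduct, dotProduct_col, smul_eq_mul,
      col_apply]
    ring_nf
  simp only [HasLineDerivAt, along_line]
  have exponent : HasDerivAt
      (fun t : ℂ => -(1 / 2) * (z ⬝ᵥ A *ᵥ z + 2 * (A *ᵥ z) k * t + A k k * t ^ 2))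
      (-(A *ᵥ z) k) ((0 : ℝ) : ℂ) := by
    refine (((((hasDerivAt_id _).const_mul _).const_add _).add
      ((hasDerivAt_pow 2 _).const_mul _)).const_mul _).congr_deriv ?_
    simp
  refine exponent.cexp.comp_ofReal.congr_deriv ?_
  simp [gaussianWeight, z, mul_comm]

theorem gaussianIntegral_pderiv {A : Matrix ι ι ℂ} (hsymm : A.IsSymm) (hA : HasGaussianMoments A)
    (k : ι) (p : MvPolynomial ι ℂ) :
    gaussianIntegral A (pderiv k p) = ∑ l, A k l * gaussianIntegral A (X l * p) := by
  classical
  have mul_deriv_eq (x : ι → ℝ) :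
      eval (ofReal ∘ x) p * -((A *ᵥ (ofReal ∘ x)) k * gaussianWeight A x) =
        -∑ l, A k l * (eval (ofReal ∘ x) (X l * p) * gaussianWeight A x) := by
    simp only [mulVec, dotProduct, map_mul, eval_X, mul_neg, Finset.sum_mul, Finset.mul_sum]
    congr! 2
    ring
  have integrable_term (l : ι) : Integrable fun x : ι → ℝ =>
      A k l * (eval (ofReal ∘ x) (X l * p) * gaussianWeight A x) := (hA _).const_mul _
  have integrable_mul_deriv : Integrable fun x : ι → ℝ =>
      eval (ofReal ∘ x) p * -((A *ᵥ (ofReal ∘ x)) k * gaussianWeight A x) := by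
    simp only [mul_deriv_eq]
    exact (integrable_finsetSum _ fun l _ => integrable_term l).neg
  have by_parts := integral_bilinear_hasLineDerivAt_right_eq_neg_left_of_integrable (μ := volume)
    (B := ContinuousLinearMap.mul ℝ ℂ) (hA (pderiv k p)) integrable_mul_deriv (hA p)
    (fun x _ => hasLineDerivAt_eval_ofReal p x k)
    (fun x _ => hasLineDerivAt_gaussianWeight hsymm x k)
  simp only [ContinuousLinearMap.mul_apply', mul_deriv_eq, integral_neg, neg_inj] at by_parts
  rw [gaussianIntegral, ← by_parts, integral_finsetSum _ fun l _ => integrable_term l]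
  simp only [integral_const_mul, gaussianIntegral]

theorem HasGaussianMoments.isLinearMap_gaussianIntegral {A : Matrix ι ι ℂ}
    (hA : HasGaussianMoments A) : IsLinearMap ℂ (gaussianIntegral A) where
  map_add p q := by
    simp only [gaussianIntegral, map_add, add_mul]
    exact integral_add (hA p) (hA q)
  map_smul c p := by
    simp only [gaussianIntegral, smul_eval, mul_assoc, integral_const_mul, smul_eq_mul]

theorem isWickFunctional_gaussianIntegral_div [DecidableEq ι] {A : Matrix ι ι ℂ}
    (hsymm : A.IsSymm) (hdet : IsUnit A.det) (hA : HasGaussianMoments A)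
    (hZ : gaussianIntegral A 1 ≠ 0) :
    IsWickFunctional A⁻¹ fun p => gaussianIntegral A p / gaussianIntegral A 1 where
  isLinearMap :=
    { map_add p q := by rw [hA.isLinearMap_gaussianIntegral.map_add, add_div]
      map_smul c p := by rw [hA.isLinearMap_gaussianIntegral.map_smul, smul_div_assoc] }
  map_one := div_self hZ
  map_X_mul i p := by
    have stein : A *ᵥ (fun l => gaussianIntegral A (X l * p)) =
        fun k => gaussianIntegral A (pderiv k p) :=
      funext fun k => (gaussianIntegral_pderiv hsymm hA k p).symm
    have solved : gaussianIntegral A (X i * p) =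
        ∑ j, A⁻¹ i j * gaussianIntegral A (pderiv j p) := by
      have inverted := congrFun (congrArg (A⁻¹ *ᵥ ·) stein) i
      rwa [mulVec_mulVec, nonsing_inv_mul A hdet, one_mulVec] at inverted
    simp only [solved, Finset.sum_div, mul_div_assoc]

end GaussianWeight

section Normalization

variable {ι κ ν : Type*} [Fintype ι]

theorem map_ofReal_mul (M : Matrix κ ι ℝ) (N : Matrix ι ν ℝ) :
    (M * N).map ofReal = M.map ofReal * N.map ofReal :=
  Matrix.map_mul (f := Complex.ofRealHom)

theorem ofReal_comp_mulVec (M : Matrix κ ι ℝ) (x : ι → ℝ) :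
    ofReal ∘ (M *ᵥ x) = M.map ofReal *ᵥ (ofReal ∘ x) :=
  funext (RingHom.map_mulVec Complex.ofRealHom M x)

variable [DecidableEq ι]

theorem exists_orthogonal_diagonalization {S : Matrix ι ι ℝ} (hS : S.IsSymm) :
    ∃ U ∈ orthogonalGroup ι ℝ, ∃ d : ι → ℝ, S = U * diagonal d * Uᵀ :=
  have hS : S.IsHermitian := by rwa [IsHermitian, conjTranspose_eq_transpose_of_trivial]
  ⟨_, hS.eigenvectorUnitary.2, hS.eigenvalues, hS.spectral_theorem⟩

variable {U : Matrix ι ι ℝ}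

theorem transpose_map_ofReal_mul_self (hU : U ∈ orthogonalGroup ι ℝ) :
    (U.map ofReal)ᵀ * U.map ofReal = 1 := by
  rw [← transpose_map, ← map_ofReal_mul, (mem_orthogonalGroup_iff' ι ℝ).mp hU,
    Matrix.map_one _ Complex.ofReal_zero Complex.ofReal_one]

theorem measurePreserving_mulVec_of_mem_orthogonalGroup (hU : U ∈ orthogonalGroup ι ℝ) :
    MeasurePreserving (U *ᵥ ·) := by
  have abs_det : |U.det| = 1 := by
    have det_mul_self : U.det * U.det = 1 := by
      simpa using congrArg det ((mem_orthogonalGroup_iff ι ℝ).mp hU)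
    exact (abs_eq zero_le_one).mpr (mul_self_eq_one_iff.mp det_mul_self)
  have det_ne_zero : U.det ≠ 0 := abs_ne_zero.mp (abs_det ▸ one_ne_zero)
  have map_volume := Real.map_matrix_volume_pi_eq_smul_volume_pi det_ne_zero
  rw [abs_inv, abs_det, inv_one, ENNReal.ofReal_one, one_smul] at map_volume
  exact ⟨by fun_prop, map_volume⟩

theorem gaussianWeight_conj_mulVec (hU : U ∈ orthogonalGroup ι ℝ) (A : Matrix ι ι ℂ) (x : ι → ℝ) :
    gaussianWeight (U.map ofReal * A * (U.map ofReal)ᵀ) (U *ᵥ x) = gaussianWeight A x := by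
  set W := U.map ofReal
  set z : ι → ℂ := ofReal ∘ x
  have quadratic_form : W *ᵥ z ⬝ᵥ (W * A * Wᵀ) *ᵥ W *ᵥ z = z ⬝ᵥ A *ᵥ z := by
    rw [mulVec_mulVec, mul_assoc, transpose_map_ofReal_mul_self hU, mul_one, ← mulVec_mulVec,
      dotProduct_mulVec, vecMul_mulVec, transpose_map_ofReal_mul_self hU, vecMul_one]
  rw [gaussianWeight, ofReal_comp_mulVec, quadratic_form, gaussianWeight]

theorem gaussianIntegral_conj_one (hU : U ∈ orthogonalGroup ι ℝ) (A : Matrix ι ι ℂ) :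
    gaussianIntegral (U.map ofReal * A * (U.map ofReal)ᵀ) 1 = gaussianIntegral A 1 := by
  have embedding : MeasurableEmbedding (U *ᵥ · : (ι → ℝ) → ι → ℝ) :=
    (toLin'OfInv ((mem_orthogonalGroup_iff' ι ℝ).mp hU) ((mem_orthogonalGroup_iff ι ℝ).mp hU)
      ).toContinuousLinearEquiv.toHomeomorph.measurableEmbedding
  simp only [gaussianIntegral, map_one, one_mul]
  rw [← (measurePreserving_mulVec_of_mem_orthogonalGroup hU).integral_comp embedding]
  simp only [gaussianWeight_conj_mulVec hU]

theorem gaussianIntegral_diagonal_one {a : ι → ℂ} (ha : ∀ i, 0 < (a i).re) :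
    gaussianIntegral (diagonal a) 1 = ∏ i, (2 * Real.pi / a i : ℂ) ^ (1 / 2 : ℂ) := by
  have integral_sum_squares := GaussianFourier.integral_cexp_neg_sum_mul_add
    (b := fun i => a i / 2) (fun i => by simpa using ha i) 0
  have factor_eq (i : ι) : (Real.pi / (a i / 2) : ℂ) = 2 * Real.pi / a i := by
    rw [div_div_eq_mul_div, mul_comm]
  simp only [Pi.zero_apply, zero_mul, Finset.sum_const_zero, add_zero, ne_eq, OfNat.ofNat_ne_zero,
    not_false_eq_true, zero_pow, zero_div, Complex.exp_zero, mul_one, factor_eq]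
    at integral_sum_squares
  rw [← integral_sum_squares]
  simp only [gaussianIntegral, gaussianWeight, map_one, one_mul, dotProduct, mulVec_diagonal,
    Function.comp_apply, Finset.mul_sum, ← Finset.sum_neg_distrib]
  congr! 4
  ring

theorem gaussianIntegral_diagonal_one_ne_zero {a : ι → ℂ} (ha : ∀ i, 0 < (a i).re) :
    gaussianIntegral (diagonal a) 1 ≠ 0 := by
  rw [gaussianIntegral_diagonal_one ha, Finset.prod_ne_zero_iff]
  intro i _
  have : a i ≠ 0 := fun h => (ha i).ne' (by simp [h])
  simp [Complex.cpow_eq_zero_iff, Real.pi_ne_zero, this]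

end Normalization

section OscillatoryGaussian

variable {ι κ : Type*} [DecidableEq ι]

/-- The precision matrix `2ε - iS` whose `gaussianWeight` is the regularized oscillatory density
`exp (-ε‖x‖²) exp (i⟨x, Sx⟩/2)`. -/
noncomputable def regularizedPrecision (S : Matrix ι ι ℝ) (ε : ℝ) : Matrix ι ι ℂ :=
  (2 * ε : ℂ) • 1 - Complex.I • S.map ofReal

theorem isSymm_regularizedPrecision {S : Matrix ι ι ℝ} (hS : S.IsSymm) (ε : ℝ) :
    (regularizedPrecision S ε).IsSymm :=
  (isSymm_one.smul _).sub ((hS.map _).smul _)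

theorem continuous_regularizedPrecision (S : Matrix ι ι ℝ) :
    Continuous (regularizedPrecision S) := by
  unfold regularizedPrecision
  fun_prop

variable [Fintype ι]

theorem dotProduct_regularizedPrecision_mulVec (S : Matrix ι ι ℝ) (ε : ℝ) (x : ι → ℝ) :
    ofReal ∘ x ⬝ᵥ regularizedPrecision S ε *ᵥ (ofReal ∘ x) =
      2 * ε * (∑ i, x i ^ 2 : ℝ) - Complex.I * (x ⬝ᵥ S *ᵥ x : ℝ) := by
  have ofReal_dotProduct (y : ι → ℝ) : ofReal ∘ x ⬝ᵥ ofReal ∘ y = (x ⬝ᵥ y : ℝ) :=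
    (RingHom.map_dotProduct Complex.ofRealHom x y).symm
  simp only [regularizedPrecision, sub_mulVec, smul_mulVec, one_mulVec, ← ofReal_comp_mulVec,
    dotProduct_sub, dotProduct_smul, ofReal_dotProduct, smul_eq_mul]
  simp only [dotProduct, sq]

theorem gaussianWeight_regularizedPrecision (S : Matrix ι ι ℝ) (ε : ℝ) (x : ι → ℝ) :
    gaussianWeight (regularizedPrecision S ε) x =
      Complex.exp ((-(ε * ∑ i, x i ^ 2) : ℝ) : ℂ) *
        Complex.exp (Complex.I / 2 * ((x ⬝ᵥ S *ᵥ x : ℝ) : ℂ)) := by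
  rw [gaussianWeight, dotProduct_regularizedPrecision_mulVec, ← Complex.exp_add]
  push_cast
  ring_nf

theorem hasGaussianMoments_regularizedPrecision (S : Matrix ι ι ℝ) {ε : ℝ} (hε : 0 < ε) :
    HasGaussianMoments (regularizedPrecision S ε) :=
  hasGaussianMoments_of_coercive (mul_pos two_pos hε) fun x => by
    rw [dotProduct_regularizedPrecision_mulVec]
    simp [-Complex.ofReal_sum]

theorem regularizedPrecision_conj_diagonal {U : Matrix ι ι ℝ} (hU : U ∈ orthogonalGroup ι ℝ)
    (d : ι → ℝ) (ε : ℝ) :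
    regularizedPrecision (U * diagonal d * Uᵀ) ε =
      U.map ofReal * diagonal (fun i => 2 * ε - Complex.I * d i) * (U.map ofReal)ᵀ := by
  have diagonal_eq : diagonal (fun i => 2 * ε - Complex.I * d i) =
      (2 * ε : ℂ) • 1 - Complex.I • (diagonal d).map ofReal := by
    rw [diagonal_map Complex.ofReal_zero, smul_one_eq_diagonal, ← diagonal_smul, diagonal_sub]
    rfl
  have mul_transpose : U.map ofReal * (U.map ofReal)ᵀ = 1 :=
    mul_eq_one_comm.mp (transpose_map_ofReal_mul_self hU)
  simp only [diagonal_eq, regularizedPrecision, map_ofReal_mul, transpose_map, mul_sub, sub_mul,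
    Matrix.mul_smul, Matrix.smul_mul, mul_one, mul_transpose]

theorem gaussianIntegral_regularizedPrecision_one_ne_zero {S : Matrix ι ι ℝ} (hS : S.IsSymm)
    {ε : ℝ} (hε : 0 < ε) : gaussianIntegral (regularizedPrecision S ε) 1 ≠ 0 := by
  obtain ⟨U, hU, d, rfl⟩ := exists_orthogonal_diagonalization hS
  rw [regularizedPrecision_conj_diagonal hU, gaussianIntegral_conj_one hU]
  exact gaussianIntegral_diagonal_one_ne_zero fun i => by simpa using hε

theorem regularizedPrecision_zero_mul {S : Matrix ι ι ℝ} (hS : IsUnit S.det) :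
    regularizedPrecision S 0 * (Complex.I • S⁻¹.map ofReal) = 1 := by
  have map_mul_inv : S.map ofReal * S⁻¹.map ofReal = 1 := by
    rw [← map_ofReal_mul, mul_nonsing_inv S hS,
      Matrix.map_one _ Complex.ofReal_zero Complex.ofReal_one]
  simp [regularizedPrecision, map_mul_inv, smul_smul]

theorem isUnit_det_regularizedPrecision_zero {S : Matrix ι ι ℝ} (hS : IsUnit S.det) :
    IsUnit (regularizedPrecision S 0).det :=
  isUnit_det_of_right_inverse (regularizedPrecision_zero_mul hS)

theorem eventually_isUnit_det_regularizedPrecision {S : Matrix ι ι ℝ} (hS : IsUnit S.det) :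
    ∀ᶠ ε in 𝓝 0, IsUnit (regularizedPrecision S ε).det := by
  simp only [isUnit_iff_ne_zero]
  exact (continuous_regularizedPrecision S).matrix_det.continuousAt.eventually_ne
    (isUnit_det_regularizedPrecision_zero hS).ne_zero

theorem tendsto_inv_regularizedPrecision {S : Matrix ι ι ℝ} (hS : IsUnit S.det) :
    Tendsto (fun ε : ℝ => (regularizedPrecision S ε)⁻¹) (𝓝 0)
      (𝓝 (Complex.I • S⁻¹.map ofReal)) := by
  rw [← inv_eq_right_inv (regularizedPrecision_zero_mul hS)]
  obtain ⟨u, hu⟩ := isUnit_det_regularizedPrecision_zero hS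
  have inverse_continuousAt : ContinuousAt Ring.inverse (regularizedPrecision S 0).det :=
    hu ▸ NormedRing.inverse_continuousAt u
  exact (continuousAt_matrix_inv _ inverse_continuousAt).tendsto.comp
    (continuous_regularizedPrecision S).continuousAt

theorem tendsto_covariance_regularizedPrecision {S : Matrix ι ι ℝ} (hS : IsUnit S.det)
    {v : κ → ι → ℝ} (hv : ∀ i j, v i ⬝ᵥ S⁻¹ *ᵥ v j = 0) :
    Tendsto (fun ε : ℝ => (of v).map ofReal * (regularizedPrecision S ε)⁻¹ * ((of v).map ofReal)ᵀ)
      (𝓝 0) (𝓝 0) := by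
  set V := (of v).map ofReal
  have real_covariance : of v * S⁻¹ * (of v)ᵀ = 0 := by
    rw [Matrix.mul_assoc]
    exact Matrix.ext hv
  have limit_eq_zero : V * (Complex.I • S⁻¹.map ofReal) * Vᵀ = 0 := by
    rw [Matrix.mul_smul, Matrix.smul_mul, ← transpose_map, ← map_ofReal_mul, ← map_ofReal_mul,
      real_covariance, Matrix.map_zero _ Complex.ofReal_zero, smul_zero]
  have conj_continuous : Continuous fun M : Matrix ι ι ℂ => V * M * Vᵀ := by fun_prop
  rw [← limit_eq_zero]
  exact (conj_continuous.tendsto _).comp (tendsto_inv_regularizedPrecision hS)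

theorem eventually_isWickFunctional_regularizedPrecision {S : Matrix ι ι ℝ} (hS : S.IsSymm)
    (hSdet : IsUnit S.det) :
    ∀ᶠ ε in 𝓝[>] 0, IsWickFunctional (regularizedPrecision S ε)⁻¹ fun p =>
      gaussianIntegral (regularizedPrecision S ε) p /
        gaussianIntegral (regularizedPrecision S ε) 1 := by
  filter_upwards [self_mem_nhdsWithin,
    nhdsWithin_le_nhds (eventually_isUnit_det_regularizedPrecision hSdet)] with ε hε hdet
  exact isWickFunctional_gaussianIntegral_div (isSymm_regularizedPrecision hS ε) hdet
    (hasGaussianMoments_regularizedPrecision S hε)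
    (gaussianIntegral_regularizedPrecision_one_ne_zero hS hε)

theorem tendsto_gaussianIntegral_regularizedPrecision_div [Finite κ] {S : Matrix ι ι ℝ}
    (hS : S.IsSymm) (hSdet : IsUnit S.det) {v : κ → ι → ℝ}
    (hv : ∀ i j, v i ⬝ᵥ S⁻¹ *ᵥ v j = 0) (p : MvPolynomial κ ℂ) :
    Tendsto (fun ε : ℝ =>
      gaussianIntegral (regularizedPrecision S ε) (bind₁ ((of v).map ofReal).toMvPolynomial p) /
        gaussianIntegral (regularizedPrecision S ε) 1)
      (𝓝[>] 0) (𝓝 (eval 0 p)) := by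
  cases nonempty_fintype κ
  have wick := (eventually_isWickFunctional_regularizedPrecision hS hSdet).mono fun _ h =>
    h.comp_bind₁_toMvPolynomial ((of v).map ofReal)
  exact IsWickFunctional.tendsto wick .eval_zero
    ((tendsto_covariance_regularizedPrecision hSdet hv).mono_left nhdsWithin_le_nhds) p

end OscillatoryGaussian

theorem eval_dotProduct_eq_eval_bind₁ {ι κ : Type*} [Fintype ι] (v : κ → ι → ℝ) (x : ι → ℝ)
    (p : MvPolynomial κ ℂ) :
    eval (fun i => ((x ⬝ᵥ v i : ℝ) : ℂ)) p =
      eval (ofReal ∘ x) (bind₁ ((of v).map ofReal).toMvPolynomial p) := by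
  have eval_linear (i : κ) : eval (ofReal ∘ x) (((of v).map ofReal).toMvPolynomial i) =
      ((x ⬝ᵥ v i : ℝ) : ℂ) := by
    rw [toMvPolynomial_eval_eq_apply, ← ofReal_comp_mulVec, dotProduct_comm]
    rfl
  simp only [← eval_linear]
  exact (eval₂Hom_bind₁ _ _ _ _).symm

/-- Moments of the regularized Gauss-type oscillatory integral on `ℝⁿ`
with symmetric invertible covariance operator `S`: if `⟨v_i, S⁻¹ v_j⟩ = 0` for all `i, j`
then for every polynomial `Φ` the normalized regularized integral of
`Φ(⟨x,v₁⟩,…,⟨x,v_m⟩)` converges to `Φ(0,…,0)` as `ε → 0⁺`; moreover for each `ε > 0` the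
numerator is absolutely convergent and the denominator is nonzero. -/
theorem stmt_6
    (n m : ℕ) (S : Matrix (Fin n) (Fin n) ℝ) (hS : S.IsSymm) (hSdet : IsUnit S.det)
    (v : Fin m → (Fin n → ℝ))
    (hv : ∀ i j : Fin m, v i ⬝ᵥ (S⁻¹).mulVec (v j) = 0)
    (P : MvPolynomial (Fin m) ℂ) :
    (∀ ε : ℝ, 0 < ε →
      Integrable fun x : Fin n → ℝ =>
        MvPolynomial.eval (fun i => ((x ⬝ᵥ v i : ℝ) : ℂ)) P *
          Complex.exp ((-(ε * ∑ i, x i ^ 2) : ℝ) : ℂ) *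
          Complex.exp (Complex.I / 2 * ((x ⬝ᵥ S.mulVec x : ℝ) : ℂ))) ∧
    (∀ ε : ℝ, 0 < ε →
      (∫ x : Fin n → ℝ,
        Complex.exp ((-(ε * ∑ i, x i ^ 2) : ℝ) : ℂ) *
          Complex.exp (Complex.I / 2 * ((x ⬝ᵥ S.mulVec x : ℝ) : ℂ))) ≠ 0) ∧
    Filter.Tendsto
      (fun ε : ℝ =>
        (∫ x : Fin n → ℝ,
          MvPolynomial.eval (fun i => ((x ⬝ᵥ v i : ℝ) : ℂ)) P *
            Complex.exp ((-(ε * ∑ i, x i ^ 2) : ℝ) : ℂ) *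
            Complex.exp (Complex.I / 2 * ((x ⬝ᵥ S.mulVec x : ℝ) : ℂ))) /
          ∫ x : Fin n → ℝ,
            Complex.exp ((-(ε * ∑ i, x i ^ 2) : ℝ) : ℂ) *
              Complex.exp (Complex.I / 2 * ((x ⬝ᵥ S.mulVec x : ℝ) : ℂ)))
      (nhdsWithin 0 (Set.Ioi 0)) (nhds (MvPolynomial.eval (fun _ => (0 : ℂ)) P)) := by
  simp_rw [mul_assoc, ← gaussianWeight_regularizedPrecision, eval_dotProduct_eq_eval_bind₁]
  refine ⟨fun ε hε => hasGaussianMoments_regularizedPrecision S hε _, fun ε hε => ?_, ?_⟩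
  · simpa [gaussianIntegral] using gaussianIntegral_regularizedPrecision_one_ne_zero hS hε
  · simpa [gaussianIntegral] using
      tendsto_gaussianIntegral_regularizedPrecision_div hS hSdet hv P
end

section
/- The limit lim_{ε→0⁺} ∫_{ℝⁿ} exp(−ε‖x‖² + (i/2)⟨x,Sx⟩) dx exists and equals ∏_{k=1}^n √(2π/|λ_k|)·e^{iπ·sgn(λ_k)/4} = (2π)^{n/2}·|det S|^{−1/2}·e^{iπ·σ(S)/4}, where λ₁,…,λ_n are the eigenvalues of S listed with multiplicity and σ(S) is the signature of S (the number of positive eigenvalues minus the number of negative eigenvalues). Equivalently, the normalization constant Z of the Gauss-type measure (1/Z)exp((i/2)⟨x,Sx⟩)dx equals ∏_{k=1}^n √(2π)·(−iλ_k)^{−1/2}, with principal square roots. -/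
open MeasureTheory Matrix Real

/-!
Writing `x = O y` diagonalizes the exponent into `-½ ∑ (2ε - iλ_k) y_k²`, so by Fubini the
regularized integral equals `∏ √(2π) (2ε - iλ_k)^(-1/2)`. Since `λ_k ≠ 0`, the point `-iλ_k` lies
off the branch cut of the principal root, so the product is continuous at `ε = 0`. The phases come
from `arg (-iλ_k) = -(π/2) sgn λ_k`, and they add up to the signature.
-/

lemma arg_neg_I_mul_ofReal (l : ℝ) :
    (-Complex.I * (l : ℂ)).arg = -(π / 2 * Real.sign l) := by
  rcases lt_trichotomy l 0 with hl | rfl | hl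
  · rw [Real.sign_of_neg hl, mul_neg_one, neg_neg, Complex.arg_eq_pi_div_two_iff]
    simpa using hl
  · simp
  · rw [Real.sign_of_pos hl, mul_one, Complex.arg_mul_real hl, Complex.arg_neg_I]

lemma neg_I_mul_ofReal_cpow {l : ℝ} (hl : l ≠ 0) (s : ℂ) :
    (-Complex.I * (l : ℂ)) ^ s =
      ((|l| : ℝ) : ℂ) ^ s * Complex.exp (-(Complex.I * π * Real.sign l * s / 2)) := by
  have hl_abs : ((|l| : ℝ) : ℂ) ≠ 0 := by simpa using hl
  have hlog : Complex.log (-Complex.I * l) =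
      Complex.log (|l| : ℝ) - Complex.I * π * Real.sign l / 2 := by
    rw [Complex.log, arg_neg_I_mul_ofReal, norm_mul, norm_neg, Complex.norm_I, one_mul,
      Complex.norm_real, Real.norm_eq_abs, ← Complex.ofReal_log (abs_nonneg l)]
    push_cast
    ring
  rw [Complex.cpow_def_of_ne_zero (by simpa using hl), Complex.cpow_def_of_ne_zero hl_abs, hlog,
    ← Complex.exp_add]
  ring_nf

lemma ofReal_sqrt_eq_cpow {a : ℝ} (ha : 0 ≤ a) : (√a : ℂ) = (a : ℂ) ^ (1 / 2 : ℂ) := by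
  rw [Real.sqrt_eq_rpow, Complex.ofReal_cpow ha]
  norm_num

lemma sqrt_mul_neg_I_mul_cpow_neg_half (a : ℝ) {l : ℝ} (hl : l ≠ 0) :
    (√a : ℂ) * (-Complex.I * (l : ℂ)) ^ (-(1 / 2 : ℂ)) =
      √(a / |l|) * Complex.exp (Complex.I * π * Real.sign l / 4) := by
  rw [neg_I_mul_ofReal_cpow hl, Complex.cpow_neg, ← ofReal_sqrt_eq_cpow (abs_nonneg l),
    Real.sqrt_div' a (abs_nonneg l), Complex.ofReal_div]
  ring_nf

lemma ofReal_div_cpow {a : ℝ} (ha : 0 < a) {z : ℂ} (hz : z ∈ Complex.slitPlane) (s : ℂ) :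
    ((a : ℂ) / z) ^ s = (a : ℂ) ^ s * z ^ (-s) := by
  have ha_ne : (a : ℂ) ≠ 0 := by simpa using ha.ne'
  have hz_inv : z⁻¹ ≠ 0 := inv_ne_zero (Complex.slitPlane_ne_zero hz)
  calc ((a : ℂ) / z) ^ s = Complex.exp (Complex.log (a * z⁻¹) * s) := by
        rw [div_eq_mul_inv, Complex.cpow_def_of_ne_zero (mul_ne_zero ha_ne hz_inv)]
    _ = (a : ℂ) ^ s * z⁻¹ ^ s := by
        rw [Complex.log_ofReal_mul ha hz_inv, add_mul, Complex.exp_add, Complex.ofReal_log ha.le,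
          ← Complex.cpow_def_of_ne_zero ha_ne, ← Complex.cpow_def_of_ne_zero hz_inv]
    _ = (a : ℂ) ^ s * z ^ (-s) := by
        rw [Complex.inv_cpow _ _ (Complex.slitPlane_arg_ne_pi hz), Complex.cpow_neg]

lemma tendsto_two_mul_add_neg_I_mul_cpow {l : ℝ} (hl : l ≠ 0) (s : ℂ) :
    Filter.Tendsto (fun ε : ℝ => (2 * (ε : ℂ) + -Complex.I * l) ^ s) (nhds 0)
      (nhds ((-Complex.I * (l : ℂ)) ^ s)) := by
  have hslit : -Complex.I * (l : ℂ) ∈ Complex.slitPlane :=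
    Complex.mem_slitPlane_iff.mpr (Or.inr (by simpa using hl))
  have hbase : Filter.Tendsto (fun ε : ℝ => 2 * (ε : ℂ) + -Complex.I * l) (nhds 0)
      (nhds (-Complex.I * (l : ℂ))) :=
    Continuous.tendsto' (by fun_prop) _ _ (by simp)
  exact hbase.cpow tendsto_const_nhds hslit

section FiniteProducts

variable {ι : Type*} (s : Finset ι) (f : ι → ℝ)

lemma sum_sign_eq_card_pos_sub_card_neg :
    ∑ k ∈ s, Real.sign (f k) =
      ((s.filter fun k => 0 < f k).card : ℝ) - (s.filter fun k => f k < 0).card := by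
  rw [Finset.card_filter, Finset.card_filter, Nat.cast_sum, Nat.cast_sum, ← Finset.sum_sub_distrib]
  refine Finset.sum_congr rfl fun k _ => ?_
  rcases lt_trichotomy (f k) 0 with hk | hk | hk
  · simp [Real.sign_of_neg hk, hk, hk.not_gt]
  · simp [hk]
  · simp [Real.sign_of_pos hk, hk, hk.not_gt]

lemma prod_sqrt_div_abs {a : ℝ} (ha : 0 ≤ a) :
    ∏ k ∈ s, √(a / |f k|) = a ^ ((s.card : ℝ) / 2) * |∏ k ∈ s, f k| ^ (-(1 / 2 : ℝ)) := by
  have hpow : √a ^ s.card = a ^ ((s.card : ℝ) / 2) := by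
    rw [Real.sqrt_eq_rpow, ← Real.rpow_mul_natCast ha]
    ring_nf
  simp_rw [Real.sqrt_div ha]
  rw [Finset.prod_div_distrib, Finset.prod_const, hpow,
    ← Real.sqrt_prod s fun k _ => abs_nonneg (f k), ← Finset.abs_prod,
    Real.rpow_neg (abs_nonneg _), ← Real.sqrt_eq_rpow, div_eq_mul_inv]

lemma prod_sqrt_mul_phase_eq_abs_prod_mul_signature {a : ℝ} (ha : 0 ≤ a) :
    ∏ k ∈ s, ((√(a / |f k|) : ℂ) * Complex.exp (Complex.I * π * Real.sign (f k) / 4)) =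
      ((a ^ ((s.card : ℝ) / 2) : ℝ) : ℂ) * ((|∏ k ∈ s, f k| ^ (-(1 / 2 : ℝ)) : ℝ) : ℂ) *
        Complex.exp (Complex.I * π * ((((s.filter fun k => 0 < f k).card : ℤ) -
          ((s.filter fun k => f k < 0).card : ℤ) : ℤ) : ℂ) / 4) := by
  rw [Finset.prod_mul_distrib, ← Complex.ofReal_prod, prod_sqrt_div_abs s f ha, Complex.ofReal_mul,
    ← Complex.exp_sum, ← Finset.sum_div, ← Finset.mul_sum, ← Complex.ofReal_sum,
    sum_sign_eq_card_pos_sub_card_neg]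
  norm_cast

end FiniteProducts

section OrthogonalDiagonalization

variable {ι κ R : Type*} [Fintype ι] [Fintype κ]

lemma dotProduct_conj_diagonal_mulVec [DecidableEq ι] [CommSemiring R]
    (O : Matrix κ ι R) (d : ι → R) (x : κ → R) :
    x ⬝ᵥ (O * diagonal d * Oᵀ) *ᵥ x = ∑ k, d k * (Oᵀ *ᵥ x) k ^ 2 := by
  rw [← mulVec_mulVec, ← mulVec_mulVec, dotProduct_mulVec, ← mulVec_transpose]
  simp only [dotProduct, mulVec_diagonal]
  exact Finset.sum_congr rfl fun k _ => by ring

lemma sum_transpose_mulVec_sq [DecidableEq κ] [CommSemiring R]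
    {O : Matrix κ ι R} (hO : O * Oᵀ = 1) (x : κ → R) :
    ∑ k, (Oᵀ *ᵥ x) k ^ 2 = ∑ i, x i ^ 2 := by
  classical
  have h := dotProduct_conj_diagonal_mulVec O 1 x
  simpa [hO, dotProduct, sq] using h.symm

variable [DecidableEq ι]

lemma abs_det_eq_one_of_mul_transpose_eq_one [CommRing R] [LinearOrder R]
    [IsStrictOrderedRing R] {O : Matrix ι ι R} (hO : O * Oᵀ = 1) : |O.det| = 1 := by
  have hdet : O.det * O.det = 1 := by simpa using congrArg det hO
  rw [← sq_eq_sq₀ (abs_nonneg _) zero_le_one, sq_abs, sq, hdet, one_pow]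

lemma integral_comp_mulVec {E : Type*} [NormedAddCommGroup E] [NormedSpace ℝ E]
    {M : Matrix ι ι ℝ} (hM : M.det ≠ 0) (f : (ι → ℝ) → E) :
    ∫ x, f (M *ᵥ x) = |M.det|⁻¹ • ∫ x, f x := by
  have hinj : Function.Injective (toLin' M) :=
    mulVec_injective_of_isUnit ((isUnit_iff_isUnit_det M).mpr hM.isUnit)
  have hemb : MeasurableEmbedding (toLin' M) :=
    (LinearMap.isClosedEmbedding_of_injective (LinearMap.ker_eq_bot.mpr hinj)).measurableEmbedding
  calc ∫ x, f (M *ᵥ x) = ∫ y, f y ∂(volume.map (toLin' M)) := (hemb.integral_map f).symm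
    _ = |M.det|⁻¹ • ∫ x, f x := by
      rw [Real.map_matrix_volume_pi_eq_smul_volume_pi hM, integral_smul_measure,
        ENNReal.toReal_ofReal (abs_nonneg _), abs_inv]

end OrthogonalDiagonalization

section GaussianIntegrals

variable {ι : Type*} [Fintype ι]

lemma integral_cexp_neg_half_sum_mul_sq {b : ι → ℂ} (hb : ∀ k, 0 < (b k).re) :
    ∫ x : ι → ℝ, Complex.exp (-(∑ k, b k * (x k : ℂ) ^ 2) / 2) =
      ∏ k, ((√(2 * π) : ℂ) * b k ^ (-(1 / 2 : ℂ))) := by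
  have hgauss := GaussianFourier.integral_cexp_neg_sum_mul_add (b := fun k => b k / 2)
    (fun k => by simpa using hb k) 0
  have hfactor (k : ι) : ((π : ℂ) / (b k / 2)) ^ (1 / 2 : ℂ) = √(2 * π) * b k ^ (-(1 / 2 : ℂ)) := by
    rw [ofReal_sqrt_eq_cpow two_pi_pos.le, ← ofReal_div_cpow two_pi_pos (Or.inl (hb k))]
    push_cast
    ring_nf
  simpa [-one_div, hfactor, Finset.sum_div, neg_div, div_mul_eq_mul_div] using hgauss

variable [DecidableEq ι]

lemma integral_cexp_neg_mul_sum_sq_add_quadraticForm {O : Matrix ι ι ℝ} (hO : O * Oᵀ = 1)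
    (d : ι → ℝ) {ε : ℝ} (hε : 0 < ε) :
    ∫ x : ι → ℝ, Complex.exp (((-(ε * ∑ i, x i ^ 2) : ℝ) : ℂ) +
        Complex.I / 2 * ((x ⬝ᵥ (O * diagonal d * Oᵀ) *ᵥ x : ℝ) : ℂ)) =
      ∏ k, ((√(2 * π) : ℂ) * (2 * (ε : ℂ) + -Complex.I * d k) ^ (-(1 / 2 : ℂ))) := by
  have habs : |Oᵀ.det| = 1 := by
    rw [det_transpose, abs_det_eq_one_of_mul_transpose_eq_one hO]
  have hexponent (x : ι → ℝ) : ((-(ε * ∑ i, x i ^ 2) : ℝ) : ℂ) +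
      Complex.I / 2 * ((x ⬝ᵥ (O * diagonal d * Oᵀ) *ᵥ x : ℝ) : ℂ) =
      -(∑ k, (2 * (ε : ℂ) + -Complex.I * d k) * ((Oᵀ *ᵥ x) k : ℂ) ^ 2) / 2 := by
    rw [← sum_transpose_mulVec_sq hO, dotProduct_conj_diagonal_mulVec]
    push_cast
    simp only [add_mul, Finset.sum_add_distrib, mul_assoc, ← Finset.mul_sum]
    ring
  simp_rw [hexponent]
  rw [integral_comp_mulVec (abs_pos.mp (habs ▸ one_pos))
      (fun y : ι → ℝ => Complex.exp (-(∑ k, (2 * (ε : ℂ) + -Complex.I * d k) * (y k : ℂ) ^ 2) / 2)),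
    habs, inv_one, one_smul, integral_cexp_neg_half_sum_mul_sq fun k => by simpa using hε]

lemma tendsto_integral_cexp_neg_mul_sum_sq_add_quadraticForm {O : Matrix ι ι ℝ}
    (hO : O * Oᵀ = 1) {d : ι → ℝ} (hd : ∀ k, d k ≠ 0) :
    Filter.Tendsto
      (fun ε : ℝ => ∫ x : ι → ℝ, Complex.exp (((-(ε * ∑ i, x i ^ 2) : ℝ) : ℂ) +
        Complex.I / 2 * ((x ⬝ᵥ (O * diagonal d * Oᵀ) *ᵥ x : ℝ) : ℂ)))
      (nhdsWithin 0 (Set.Ioi 0))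
      (nhds (∏ k, ((√(2 * π) : ℂ) * (-Complex.I * (d k : ℂ)) ^ (-(1 / 2 : ℂ))))) := by
  have hprod : Filter.Tendsto
      (fun ε : ℝ => ∏ k, ((√(2 * π) : ℂ) * (2 * (ε : ℂ) + -Complex.I * d k) ^ (-(1 / 2 : ℂ))))
      (nhds 0) (nhds (∏ k, ((√(2 * π) : ℂ) * (-Complex.I * (d k : ℂ)) ^ (-(1 / 2 : ℂ))))) :=
    tendsto_finsetProd _ fun k _ => (tendsto_two_mul_add_neg_I_mul_cpow (hd k) _).const_mul _
  refine (hprod.mono_left nhdsWithin_le_nhds).congr' ?_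
  filter_upwards [self_mem_nhdsWithin] with ε hε
  exact (integral_cexp_neg_mul_sum_sq_add_quadraticForm hO d hε).symm

end GaussianIntegrals

/-- The Fresnel (Gauss-type) normalization integral: the regularized
integrals `∫ exp(−ε‖x‖² + (i/2)⟨x,Sx⟩) dx` converge, as `ε → 0⁺`, to
`∏_k √(2π/|λ_k|)·e^{iπ·sgn(λ_k)/4}`, which equals
`(2π)^{n/2}·|det S|^{−1/2}·e^{iπσ(S)/4}` and also `∏_k √(2π)·(−iλ_k)^{−1/2}`
(with principal powers), `λ_k` being the eigenvalues of the symmetric invertible matrix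
`S`, listed with multiplicity via an orthogonal diagonalization. -/
theorem stmt_7
    (n : ℕ) (S : Matrix (Fin n) (Fin n) ℝ) (hS : S.IsSymm) (hSdet : IsUnit S.det)
    (lam : Fin n → ℝ) (O : Matrix (Fin n) (Fin n) ℝ)
    (hO : O * Oᵀ = 1) (hdiag : S = O * Matrix.diagonal lam * Oᵀ) :
    Filter.Tendsto
      (fun ε : ℝ => ∫ x : Fin n → ℝ,
        Complex.exp (((-(ε * ∑ i, x i ^ 2) : ℝ) : ℂ) +
          Complex.I / 2 * ((x ⬝ᵥ S.mulVec x : ℝ) : ℂ)))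
      (nhdsWithin 0 (Set.Ioi 0))
      (nhds (∏ k, ((Real.sqrt (2 * π / |lam k|) : ℂ) *
        Complex.exp (Complex.I * (π : ℂ) * ((Real.sign (lam k) : ℝ) : ℂ) / 4)))) ∧
    (∏ k, ((Real.sqrt (2 * π / |lam k|) : ℂ) *
        Complex.exp (Complex.I * (π : ℂ) * ((Real.sign (lam k) : ℝ) : ℂ) / 4))) =
      (((2 * π) ^ ((n : ℝ) / 2) : ℝ) : ℂ) * ((|S.det| ^ (-(1 / 2 : ℝ)) : ℝ) : ℂ) *
        Complex.exp (Complex.I * (π : ℂ) *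
          ((((Finset.univ.filter fun k => 0 < lam k).card : ℤ) -
            ((Finset.univ.filter fun k => lam k < 0).card : ℤ) : ℤ) : ℂ) / 4) ∧
    (∏ k, ((Real.sqrt (2 * π / |lam k|) : ℂ) *
        Complex.exp (Complex.I * (π : ℂ) * ((Real.sign (lam k) : ℝ) : ℂ) / 4))) =
      ∏ k, ((Real.sqrt (2 * π) : ℂ) * (-Complex.I * (lam k : ℂ)) ^ (-(1 / 2 : ℂ))) := by
  have hdet : S.det = ∏ k, lam k := by
    rw [hdiag, det_conj_of_mul_eq_one hO (mul_eq_one_comm.mp hO), det_diagonal]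
  have hlam (k : Fin n) : lam k ≠ 0 :=
    Finset.prod_ne_zero_iff.mp (hdet ▸ hSdet.ne_zero) k (Finset.mem_univ k)
  have hroots := Finset.prod_congr rfl fun k (_ : k ∈ Finset.univ) =>
    sqrt_mul_neg_I_mul_cpow_neg_half (2 * π) (hlam k)
  refine ⟨?_, ?_, hroots.symm⟩
  · rw [hdiag, ← hroots]
    exact tendsto_integral_cexp_neg_mul_sum_sq_add_quadraticForm hO hlam
  · rw [hdet, prod_sqrt_mul_phase_eq_abs_prod_mul_signature _ _ two_pi_pos.le, Finset.card_univ,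
      Fintype.card_fin]
end

section
/- Assume w is a linear isometry of V with w(Λ) = Λ and m(w·v) = m(v) for all v ∈ V, and assume y ∈ V satisfies ⟨y, λ⟩ ∈ ℤ for every λ ∈ Λ. Then for all η₁, η₂ ∈ V one has m((τ∗η₁ − τ∗η₂)/p) · θ_{τ∗η₁}^{q/p} · θ_{τ∗η₂}^{−q/p} = m((η₁ − η₂)/p) · θ_{η₁}^{q/p} · θ_{η₂}^{−q/p}, where τ∗η := w(η+ρ) + k·y − ρ. -/
open Real

/-!
Since `⟨η, η + 2ρ⟩ = ‖η + ρ‖² - ‖ρ‖²` and `τ∗η + ρ = w(η + ρ) + k y`, the `∗`-action changes the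
difference `⟨η₁, η₁ + 2ρ⟩ - ⟨η₂, η₂ + 2ρ⟩` by `2k⟨y, w(η₁ - η₂)⟩`, so it multiplies
`θ_{η₁}^{q/p} θ_{η₂}^{-q/p}` by `exp(2πi q ⟨y, w((η₁ - η₂)/p)⟩)`. If `m` does not vanish at
`(η₁ - η₂)/p`, it does not vanish at `w((η₁ - η₂)/p)` either, so `y` pairs integrally with that
vector and the factor is `1`.
-/

section

variable {V : Type*} [NormedAddCommGroup V] [InnerProductSpace ℝ V]

/-- The scalar `⟨η, η + 2ρ⟩`, by which the quadratic Casimir element acts on the irreducible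
representation of highest weight `η`. -/
noncomputable def casimirScalar (ρ η : V) : ℝ :=
  inner ℝ η (η + (2 : ℝ) • ρ)

/-- The power `θ_η^r` of the twist at level `k`, with the branch of the power fixed by multiplying
the exponent of `θ_η = exp((πi/k)⟨η, η + 2ρ⟩)` by `r`. -/
noncomputable def twistPow (ρ : V) (k r : ℝ) (η : V) : ℂ :=
  Complex.exp (r * π * Complex.I / k * casimirScalar ρ η)

/-- The `∗`-action `τ∗η = k τ((η + ρ)/k) - ρ` of the affine map `τ b = w b + y`, written so that
it makes sense without dividing by `k`. -/
def starAction (ρ : V) (k : ℝ) (w : V →ₗᵢ[ℝ] V) (y η : V) : V :=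
  w (η + ρ) + k • y - ρ

theorem casimirScalar_eq_norm_sq_sub (ρ η : V) :
    casimirScalar ρ η = ‖η + ρ‖ ^ 2 - ‖ρ‖ ^ 2 := by
  rw [casimirScalar, norm_add_sq_real, inner_add_right, inner_smul_right,
    real_inner_self_eq_norm_sq]
  ring

theorem starAction_sub_starAction (ρ : V) (k : ℝ) (w : V →ₗᵢ[ℝ] V) (y η₁ η₂ : V) :
    starAction ρ k w y η₁ - starAction ρ k w y η₂ = w (η₁ - η₂) := by
  simp only [starAction, map_add, map_sub]
  abel

theorem casimirScalar_starAction (ρ : V) (k : ℝ) (w : V →ₗᵢ[ℝ] V) (y η : V) :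
    casimirScalar ρ (starAction ρ k w y η) =
      casimirScalar ρ η + 2 * k * inner ℝ y (w (η + ρ)) + ‖k • y‖ ^ 2 := by
  rw [casimirScalar_eq_norm_sq_sub, casimirScalar_eq_norm_sq_sub, starAction, sub_add_cancel,
    norm_add_sq_real, w.norm_map, inner_smul_right, real_inner_comm]
  ring

theorem casimirScalar_starAction_sub (ρ : V) (k : ℝ) (w : V →ₗᵢ[ℝ] V) (y η₁ η₂ : V) :
    casimirScalar ρ (starAction ρ k w y η₁) - casimirScalar ρ (starAction ρ k w y η₂) =
      casimirScalar ρ η₁ - casimirScalar ρ η₂ + 2 * k * inner ℝ y (w (η₁ - η₂)) := by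
  have inner_sub : (inner ℝ y (w (η₁ - η₂)) : ℝ) =
      inner ℝ y (w (η₁ + ρ)) - inner ℝ y (w (η₂ + ρ)) := by
    rw [← inner_sub_right, ← map_sub, add_sub_add_right_eq_sub]
  rw [casimirScalar_starAction, casimirScalar_starAction, inner_sub]
  ring

theorem twistPow_mul_twistPow_neg (ρ : V) (k r : ℝ) (η₁ η₂ : V) :
    twistPow ρ k r η₁ * twistPow ρ k (-r) η₂ =
      Complex.exp (r * π * Complex.I / k *
        ((casimirScalar ρ η₁ - casimirScalar ρ η₂ : ℝ) : ℂ)) := by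
  rw [twistPow, twistPow, ← Complex.exp_add]
  push_cast
  ring_nf

theorem twistPow_starAction_mul_twistPow_neg_starAction (ρ : V) {k r : ℝ} (hk : k ≠ 0)
    (w : V →ₗᵢ[ℝ] V) (y : V) {η₁ η₂ : V} {n : ℤ} (hn : r * inner ℝ y (w (η₁ - η₂)) = n) :
    twistPow ρ k r (starAction ρ k w y η₁) * twistPow ρ k (-r) (starAction ρ k w y η₂) =
      twistPow ρ k r η₁ * twistPow ρ k (-r) η₂ := by
  rw [twistPow_mul_twistPow_neg, twistPow_mul_twistPow_neg, casimirScalar_starAction_sub,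
    Complex.exp_eq_exp_iff_exists_int]
  refine ⟨n, ?_⟩
  have hkC : (k : ℂ) ≠ 0 := Complex.ofReal_ne_zero.mpr hk
  have hnC : (r : ℂ) * (inner ℝ y (w (η₁ - η₂)) : ℝ) = n := mod_cast hn
  rw [← hnC]
  push_cast
  field_simp

theorem twistPow_mul_inv (ρ : V) (k p q : ℝ) (η : V) :
    twistPow ρ k (q * p⁻¹) η =
      Complex.exp (q * π * Complex.I / (p * k) * (inner ℝ η (η + (2 : ℝ) • ρ) : ℝ)) := by
  rw [twistPow, casimirScalar]
  push_cast
  ring_nf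

-- The scale `s` plays the role of `1/p`.
theorem stmt_15_general (m : V → ℂ) (ρ : V) {k : ℝ} (hk : k ≠ 0) (s : ℝ) (q : ℤ)
    (w : V →ₗᵢ[ℝ] V) (hmw : ∀ v, m (w v) = m v)
    (y : V) (hy : ∀ v, m v ≠ 0 → ∃ n : ℤ, (inner ℝ y v : ℝ) = n) (η₁ η₂ : V) :
    m (s • (starAction ρ k w y η₁ - starAction ρ k w y η₂)) *
        twistPow ρ k (q * s) (starAction ρ k w y η₁) *
        twistPow ρ k (-(q * s)) (starAction ρ k w y η₂) =
      m (s • (η₁ - η₂)) * twistPow ρ k (q * s) η₁ * twistPow ρ k (-(q * s)) η₂ := by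
  rw [starAction_sub_starAction, ← map_smul, hmw, mul_assoc, mul_assoc]
  by_cases hm : m (s • (η₁ - η₂)) = 0
  · rw [hm, zero_mul, zero_mul]
  · obtain ⟨n, hn⟩ := hy (w (s • (η₁ - η₂))) (by rwa [hmw])
    have phase_integral : q * s * inner ℝ y (w (η₁ - η₂)) = ((q * n : ℤ) : ℝ) := by
      rw [Int.cast_mul, ← hn, map_smul, inner_smul_right, mul_assoc]
    rw [twistPow_starAction_mul_twistPow_neg_starAction ρ hk w y phase_integral]

end

/-- Invariance of the combined weight-multiplicity/phase quantity
`m((η₁−η₂)/p)·θ_{η₁}^{q/p}·θ_{η₂}^{−q/p}` under the `∗`-action `τ∗η = w(η+ρ)+k·y−ρ`,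
where `w` is a linear isometry preserving the weight lattice `Λ` and the multiplicity
function `m`, and `⟨y,λ⟩ ∈ ℤ` for all `λ ∈ Λ`. -/
theorem stmt_15
    (V : Type*) [NormedAddCommGroup V] [InnerProductSpace ℝ V] [FiniteDimensional ℝ V]
    (Λ : AddSubgroup V) (m : V → ℤ) (hm : ∀ v, v ∉ Λ → m v = 0)
    (ρ : V) (k : ℕ) (hk : 0 < k) (p q : ℤ) (hp : p ≠ 0) (hq : q ≠ 0)
    (w : V →ₗᵢ[ℝ] V) (hwΛ : ⇑w '' (Λ : Set V) = (Λ : Set V)) (hmw : ∀ v, m (w v) = m v)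
    (y : V) (hy : ∀ l ∈ Λ, ∃ n : ℤ, (inner ℝ y l : ℝ) = (n : ℝ)) :
    ∀ η₁ η₂ : V,
      ((m ((p : ℝ)⁻¹ • ((w (η₁ + ρ) + (k : ℝ) • y - ρ) - (w (η₂ + ρ) + (k : ℝ) • y - ρ))) : ℂ) *
          Complex.exp ((q : ℂ) * (π : ℂ) * Complex.I / ((p : ℂ) * (k : ℂ)) *
            ((inner ℝ (w (η₁ + ρ) + (k : ℝ) • y - ρ)
              (w (η₁ + ρ) + (k : ℝ) • y - ρ + (2 : ℝ) • ρ) : ℝ) : ℂ)) *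
          Complex.exp (-((q : ℂ) * (π : ℂ) * Complex.I / ((p : ℂ) * (k : ℂ))) *
            ((inner ℝ (w (η₂ + ρ) + (k : ℝ) • y - ρ)
              (w (η₂ + ρ) + (k : ℝ) • y - ρ + (2 : ℝ) • ρ) : ℝ) : ℂ))) =
        (m ((p : ℝ)⁻¹ • (η₁ - η₂)) : ℂ) *
          Complex.exp ((q : ℂ) * (π : ℂ) * Complex.I / ((p : ℂ) * (k : ℂ)) *
            ((inner ℝ η₁ (η₁ + (2 : ℝ) • ρ) : ℝ) : ℂ)) *
          Complex.exp (-((q : ℂ) * (π : ℂ) * Complex.I / ((p : ℂ) * (k : ℂ))) *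
            ((inner ℝ η₂ (η₂ + (2 : ℝ) • ρ) : ℝ) : ℂ)) := by
  intro η₁ η₂
  have hy_supp : ∀ v, (m v : ℂ) ≠ 0 → ∃ n : ℤ, (inner ℝ y v : ℝ) = n := fun v hv =>
    hy v (by_contra fun hvΛ => hv (by rw [hm v hvΛ, Int.cast_zero]))
  simpa only [← neg_mul, twistPow_mul_inv, starAction, ← neg_div, Complex.ofReal_neg,
    Complex.ofReal_intCast, Complex.ofReal_natCast] using
    stmt_15_general (fun v => (m v : ℂ)) ρ (Nat.cast_ne_zero.mpr hk.ne') (p : ℝ)⁻¹ q w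
      (fun v => congrArg _ (hmw v)) y hy_supp η₁ η₂
end
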